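/- arXiv:math/0608664 — 2 statements merged into one kernel-verified Lean document; each statement's English description precedes it below -/
import Mathlib

section
/- Let G and G' be subgroups of (Z/p^k Z)^{2g}, each isomorphic to (Z/p^k Z)^m, equipped with the restriction of the standard symplectic form (.,.)_{p^k}, and let ψ: G → G' be an isomorphism satisfying (ψ(a), ψ(b))_{p^k} = (a, b)_{p^k} for all a, b ∈ G. Then ψ extends to an automorphism of (Z/p^k Z)^{2g} preserving the form (.,.)_{p^k}. -/
open scoped Matrix

def sympJ (g : ℕ) (R : Type) [CommRing R] : Matrix (Fin (2*g)) (Fin (2*g)) R :=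
  fun i j => if (i : ℕ) + (j : ℕ) = 2*g - 1 then (if (i : ℕ) < (j : ℕ) then 1 else -1) else 0

def symp (g : ℕ) (R : Type) [CommRing R] (x y : Fin (2*g) → R) : R :=
  x ⬝ᵥ (sympJ g R).mulVec y

/-!
Over a local ring, a symplectic transvection `v ↦ v + c ω(u, v) u` with `u = y - x` carries `x` to
`y` as soon as `ω(y, x)` is a unit, and it fixes everything orthogonal to `u`. If `ω(y, x)` is not a
unit, passing through an intermediate vector `x + w` reduces to that case. So one can move the
vectors of a basis of `G` to their images one at a time, each time by transvections along directions
orthogonal to the images already reached; the required vectors `w` exist because every functional on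
`G` (and on `G'`) is represented by `ω`. For `ℤ/p^k` this representability comes for free: the form
is unimodular and `ℤ/n` is an injective module over itself.
-/

open Function Module
open LinearMap (BilinForm)

section LocalRing

variable {R M : Type*} [CommRing R] [IsLocalRing R] [AddCommGroup M] [Module R M]

theorem isUnit_add_of_not_isUnit {a b : R} (ha : IsUnit a) (hb : ¬IsUnit b) : IsUnit (a + b) := by
  have h : IsUnit (a + b + -b) := by rwa [add_neg_cancel_right]
  exact (IsLocalRing.isUnit_or_isUnit_of_isUnit_add h).resolve_right (by rwa [IsUnit.neg_iff])

theorem exists_mem_isUnit_apply_and_isUnit_apply {f g : M →ₗ[R] R} {W : Submodule R M}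
    (hf : ∃ w ∈ W, IsUnit (f w)) (hg : ∃ w ∈ W, IsUnit (g w)) :
    ∃ w ∈ W, IsUnit (f w) ∧ IsUnit (g w) := by
  obtain ⟨w, hw, hfw⟩ := hf
  obtain ⟨w', hw', hgw'⟩ := hg
  by_cases hgw : IsUnit (g w)
  · exact ⟨w, hw, hfw, hgw⟩
  by_cases hfw' : IsUnit (f w')
  · exact ⟨w', hw', hfw', hgw'⟩
  refine ⟨w + w', add_mem hw hw', ?_, ?_⟩
  · rw [map_add]
    exact isUnit_add_of_not_isUnit hfw hfw'
  · rw [map_add, add_comm]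
    exact isUnit_add_of_not_isUnit hgw' hgw

end LocalRing

section SelfInjective

variable {R : Type*} [CommRing R]

theorem baer_self_of_forall_dvd [IsPrincipalIdealRing R]
    (h : ∀ a y : R, (∀ r, r * a = 0 → r * y = 0) → a ∣ y) : Baer R R := by
  intro I f
  obtain ⟨a, rfl⟩ := (IsPrincipalIdealRing.principal I).principal
  let a' : Ideal.span {a} := ⟨a, Ideal.mem_span_singleton_self a⟩
  obtain ⟨z, hz⟩ : a ∣ f a' := h a (f a') fun r hr ↦ by
    have hra : r • a' = 0 := Subtype.ext hr
    rw [← smul_eq_mul, ← map_smul, hra, map_zero]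
  refine ⟨LinearMap.toSpanSingleton R R z, fun x hx ↦ ?_⟩
  obtain ⟨r, rfl⟩ := Ideal.mem_span_singleton'.1 hx
  calc LinearMap.toSpanSingleton R R z (r * a) = r • f a' := by rw [hz]; simp [mul_assoc]
    _ = f (r • a') := (map_smul f r a').symm

theorem surjective_dualRestrict_comp {V : Type*} [AddCommGroup V] [Module R V]
    [Module.Injective R R] {ω : BilinForm R V} (hω : Surjective ω) (G : Submodule R V) :
    Surjective (G.dualRestrict ∘ₗ ω) := by
  have h_restrict : Surjective G.dualRestrict := fun f ↦
    Injective.extension_property R R G V G.subtype G.injective_subtype f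
  exact h_restrict.comp hω

end SelfInjective

section ZMod

instance isLocalRing_zmod_prime_pow (p k : ℕ) [Fact p.Prime] [NeZero k] :
    IsLocalRing (ZMod (p ^ k)) :=
  have : Nontrivial (ZMod (p ^ k)) :=
    ZMod.nontrivial_iff.2 (Nat.one_lt_pow (NeZero.ne k) (Fact.out : p.Prime).one_lt).ne'
  .of_surjective' (PadicInt.toZModPow k) (ZMod.ringHom_surjective _)

theorem zmod_dvd_of_forall_mul_eq_zero {n : ℕ} [NeZero n] {a y : ZMod n}
    (h : ∀ r, r * a = 0 → r * y = 0) : a ∣ y := by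
  obtain ⟨A, rfl⟩ := ZMod.natCast_zmod_surjective a
  obtain ⟨Y, rfl⟩ := ZMod.natCast_zmod_surjective y
  obtain ⟨q, hq⟩ := Nat.gcd_dvd_right A n
  obtain ⟨b, hb⟩ := Nat.gcd_dvd_left A n
  have hq_pos : 0 < q := Nat.pos_of_mul_pos_left (hq ▸ NeZero.pos n)
  have hqA : (q : ZMod n) * A = 0 := by
    rw [← Nat.cast_mul, ZMod.natCast_eq_zero_iff]
    exact ⟨b, by calc
      q * A = q * (A.gcd n * b) := by rw [← hb]
      _ = A.gcd n * q * b := by ring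
      _ = n * b := by rw [← hq]⟩
  have hqY : n ∣ q * Y := by
    rw [← ZMod.natCast_eq_zero_iff, Nat.cast_mul, h _ hqA]
  have h_gcd_dvd : A.gcd n ∣ Y := by
    have h_mul : q * A.gcd n ∣ q * Y := by rwa [mul_comm q (A.gcd n), ← hq]
    exact Nat.dvd_of_mul_dvd_mul_left hq_pos h_mul
  have h_dvd_gcd : (A : ZMod n) ∣ (A.gcd n : ℕ) := by
    refine ⟨A.gcdA n, ?_⟩
    have := congrArg (Int.cast : ℤ → ZMod n) (Nat.gcd_eq_gcd_ab A n)
    simpa using this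
  exact h_dvd_gcd.trans (Nat.cast_dvd_cast h_gcd_dvd)

instance injective_zmod_self (n : ℕ) [NeZero n] : Module.Injective (ZMod n) (ZMod n) :=
  have : IsPrincipalIdealRing (ZMod n) :=
    .of_surjective (Int.castRingHom (ZMod n)) ZMod.intCast_surjective
  (baer_self_of_forall_dvd fun _ _ ↦ zmod_dvd_of_forall_mul_eq_zero).injective

end ZMod

section StandardForm

variable {n R : Type*} [Fintype n] [DecidableEq n] [CommRing R]

theorem isAlt_toBilin'_of_transpose_eq_neg {A : Matrix n n R} (hA : Aᵀ = -A)
    (hdiag : ∀ i, A i i = 0) : A.toBilin'.IsAlt := by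
  intro x
  rw [Matrix.toBilin'_apply, ← Fintype.sum_prod_type']
  refine Finset.sum_involution (fun ij _ ↦ ij.swap) ?_ ?_ (by simp) (by simp)
  · rintro ⟨i, j⟩ -
    have hij : A j i = -A i j := congrFun₂ hA i j
    simp only [Prod.swap_prod_mk, hij]
    ring
  · rintro ⟨i, j⟩ - hne heq
    obtain rfl : j = i := congrArg Prod.fst heq
    simp [hdiag] at hne

theorem surjective_toBilin'_of_isUnit {A : Matrix n n R} (hA : IsUnit A) :
    Surjective A.toBilin' := by
  intro f
  obtain ⟨v, hv⟩ := Matrix.vecMul_surjective_iff_isUnit.2 hA fun i ↦ f (Pi.single i 1)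
  refine ⟨v, LinearMap.pi_ext' fun i ↦ LinearMap.ext_ring ?_⟩
  simpa only [LinearMap.comp_apply, LinearMap.single_apply, Matrix.toBilin'_apply',
    Matrix.dotProduct_mulVec, dotProduct_single_one] using congrFun hv i

theorem transpose_sympJ (g : ℕ) (R : Type) [CommRing R] : (sympJ g R)ᵀ = -sympJ g R := by
  ext i j
  simp only [Matrix.transpose_apply, Matrix.neg_apply, sympJ]
  split_ifs <;> first | lia | simp

theorem sympJ_mul_self (g : ℕ) (R : Type) [CommRing R] : sympJ g R * sympJ g R = -1 := by
  ext i j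
  rw [Matrix.mul_apply, Finset.sum_eq_single i.rev, Matrix.neg_apply, Matrix.one_apply]
  · simp only [sympJ, Fin.val_rev, Fin.ext_iff]
    split_ifs <;> first | lia | simp
  · intro l _ hl
    rw [sympJ, if_neg (by rw [ne_eq, Fin.ext_iff, Fin.val_rev] at hl; lia), zero_mul]
  · simp

theorem isAlt_toBilin'_sympJ (g : ℕ) (R : Type) [CommRing R] : (sympJ g R).toBilin'.IsAlt :=
  isAlt_toBilin'_of_transpose_eq_neg (transpose_sympJ g R) fun i ↦ if_neg (by lia)

theorem isUnit_sympJ (g : ℕ) (R : Type) [CommRing R] : IsUnit (sympJ g R) :=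
  .of_mul_eq_one (-sympJ g R) (by rw [mul_neg, sympJ_mul_self, neg_neg])

theorem surjective_dualRestrict_comp_toBilin'_sympJ (g : ℕ) {R : Type} [CommRing R]
    [Module.Injective R R] (G : Submodule R (Fin (2 * g) → R)) :
    Surjective (G.dualRestrict ∘ₗ (sympJ g R).toBilin') :=
  surjective_dualRestrict_comp (surjective_toBilin'_of_isUnit (isUnit_sympJ g R)) G

end StandardForm

section AlternatingForm

variable {R V : Type*} [CommRing R] [AddCommGroup V] [Module R V] {ω : BilinForm R V}

/-- The symplectic transvection `v ↦ v + c ω(u, v) u`, as an isometry of the alternating form `ω`.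
Extending an isometry proceeds by composing such maps. -/
def symplecticTransvection (hω : ω.IsAlt) (c : R) (u : V) : ω.IsometryEquiv ω where
  toLinearEquiv := LinearEquiv.transvection (f := c • ω u) (v := u) (by simp [hω.self_eq_zero])
  map_app' v w := by
    change ω (v + (c * ω u v) • u) (w + (c * ω u w) • u) = ω v w
    simp only [map_add, map_smul, LinearMap.add_apply, LinearMap.smul_apply, smul_eq_mul,
      hω.self_eq_zero, ← hω.neg_eq u v]
    ring

theorem symplecticTransvection_apply (hω : ω.IsAlt) (c : R) (u v : V) :
    symplecticTransvection hω c u v = v + (c * ω u v) • u :=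
  rfl

theorem exists_isometryEquiv_apply_eq_of_isUnit (hω : ω.IsAlt) {x y : V} (h : IsUnit (ω y x)) :
    ∃ T : ω.IsometryEquiv ω, (∀ v, ω (y - x) v = 0 → T v = v) ∧ T x = y := by
  obtain ⟨c, hc⟩ := h.exists_left_inv
  refine ⟨symplecticTransvection hω c (y - x), fun v hv ↦ ?_, ?_⟩
  · rw [symplecticTransvection_apply, hv, mul_zero, zero_smul, add_zero]
  · rw [symplecticTransvection_apply, map_sub, LinearMap.sub_apply, hω.self_eq_zero, sub_zero,
      hc, one_smul, add_sub_cancel]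

variable [IsLocalRing R]

theorem exists_isometryEquiv_apply_eq (hω : ω.IsAlt) (W : Submodule R V) {x y : V}
    (hxy : y - x ∈ W) (hx : ∃ w ∈ W, IsUnit (ω w x)) (hy : ∃ w ∈ W, IsUnit (ω w y)) :
    ∃ T : ω.IsometryEquiv ω, (∀ v, (∀ w ∈ W, ω w v = 0) → T v = v) ∧ T x = y := by
  by_cases hyx : IsUnit (ω y x)
  · obtain ⟨T, hT, hTx⟩ := exists_isometryEquiv_apply_eq_of_isUnit hω hyx
    exact ⟨T, fun v hv ↦ hT v (hv _ hxy), hTx⟩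
  obtain ⟨w, hw, hwx, hwy⟩ : ∃ w ∈ W, IsUnit (ω w x) ∧ IsUnit (ω w y) :=
    exists_mem_isUnit_apply_and_isUnit_apply (f := ω.flip x) (g := ω.flip y) hx hy
  have hxw : IsUnit (ω (x + w) x) := by
    rwa [map_add, LinearMap.add_apply, hω.self_eq_zero, zero_add]
  have hxwy : IsUnit (ω y (x + w)) := by
    rw [map_add, add_comm, ← hω.neg_eq w y]
    exact isUnit_add_of_not_isUnit hwy.neg hyx
  obtain ⟨T₁, hT₁, hT₁x⟩ := exists_isometryEquiv_apply_eq_of_isUnit hω hxw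
  obtain ⟨T₂, hT₂, hT₂x⟩ := exists_isometryEquiv_apply_eq_of_isUnit hω hxwy
  refine ⟨T₁.trans T₂, fun v hv ↦ ?_, ?_⟩
  · have h₁ : T₁ v = v := hT₁ v (by rw [add_sub_cancel_left, hv w hw])
    have h₂ : T₂ v = v := hT₂ v (hv _ (by simpa only [sub_sub] using sub_mem hxy hw))
    exact (congrArg T₂ h₁).trans h₂
  · exact (congrArg T₂ hT₁x).trans hT₂x

theorem exists_isometryEquiv_forall_mem_apply_eq {ι : Type*} (hω : ω.IsAlt)
    {x y : ι → V} (hxy : ∀ i j, ω (x i) (x j) = ω (y i) (y j))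
    (hx : ∀ i, ∃ w, IsUnit (ω w (x i)) ∧ ∀ j ≠ i, ω w (x j) = 0)
    (hy : ∀ i, ∃ w, IsUnit (ω w (y i)) ∧ ∀ j ≠ i, ω w (y j) = 0) (s : Finset ι) :
    ∃ T : ω.IsometryEquiv ω, ∀ i ∈ s, T (x i) = y i := by
  classical
  induction s using Finset.induction_on with
  | empty => exact ⟨.refl ω, by simp⟩
  | insert a s ha ih =>
    obtain ⟨T, hT⟩ := ih
    let W : Submodule R V := ⨅ i ∈ s, LinearMap.ker (ω.flip (y i))
    have mem_W {w : V} : w ∈ W ↔ ∀ i ∈ s, ω w (y i) = 0 := by simp [W]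
    have ne_of_mem {i : ι} (hi : i ∈ s) : i ≠ a := ne_of_mem_of_not_mem hi ha
    have h_diff : y a - T (x a) ∈ W := mem_W.2 fun i hi ↦ by
      rw [map_sub, LinearMap.sub_apply, sub_eq_zero, ← hxy, ← hT i hi, T.map_app]
    have h_source : ∃ w ∈ W, IsUnit (ω w (T (x a))) := by
      obtain ⟨w, hwa, hw⟩ := hx a
      refine ⟨T w, mem_W.2 fun i hi ↦ ?_, by rwa [T.map_app]⟩
      rw [← hT i hi, T.map_app, hw i (ne_of_mem hi)]
    have h_target : ∃ w ∈ W, IsUnit (ω w (y a)) := by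
      obtain ⟨w, hwa, hw⟩ := hy a
      exact ⟨w, mem_W.2 fun i hi ↦ hw i (ne_of_mem hi), hwa⟩
    obtain ⟨T', hT', hT'a⟩ := exists_isometryEquiv_apply_eq hω W h_diff h_source h_target
    refine ⟨T.trans T', (Finset.forall_mem_insert ..).2 ⟨hT'a, fun i hi ↦ ?_⟩⟩
    exact (congrArg T' (hT i hi)).trans (hT' _ fun w hw ↦ mem_W.1 hw i hi)

theorem stmt3_general {ι : Type*} [Finite ι] (hω : ω.IsAlt) {G G' : Submodule R V}
    (b : Basis ι R G) (hG : Surjective (G.dualRestrict ∘ₗ ω))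
    (hG' : Surjective (G'.dualRestrict ∘ₗ ω)) (ψ : G ≃ₗ[R] G')
    (hψ : ∀ x y : G, ω (ψ x) (ψ y) = ω x y) :
    ∃ Ψ : V ≃ₗ[R] V, (∀ x y, ω (Ψ x) (Ψ y) = ω x y) ∧ ∀ x : G, Ψ x = ψ x := by
  have : Fintype ι := .ofFinite ι
  have exists_dual {H : Submodule R V} (hH : Surjective (H.dualRestrict ∘ₗ ω)) (b : Basis ι R H)
      (i : ι) : ∃ w, IsUnit (ω w (b i)) ∧ ∀ j ≠ i, ω w (b j) = 0 := by
    obtain ⟨w, hw⟩ := hH (b.coord i)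
    have hw_apply (j : ι) : ω w (b j) = b.coord i (b j) := LinearMap.congr_fun hw (b j)
    refine ⟨w, ?_, fun j hj ↦ ?_⟩
    · simp [hw_apply]
    · simp [hw_apply, hj]
  obtain ⟨T, hT⟩ := exists_isometryEquiv_forall_mem_apply_eq hω
    (fun i j ↦ (hψ (b i) (b j)).symm) (exists_dual hG b)
    (by simpa only [Basis.map_apply] using exists_dual hG' (b.map ψ)) Finset.univ
  have h_eq : T.toLinearEquiv.toLinearMap ∘ₗ G.subtype = G'.subtype ∘ₗ ψ.toLinearMap :=
    b.ext fun i ↦ hT i (Finset.mem_univ i)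
  exact ⟨T.toLinearEquiv, T.map_app', LinearMap.congr_fun h_eq⟩

end AlternatingForm

/-- Edmonds' extension theorem: an isomorphism between two submodules of
`(ℤ/p^kℤ)^{2g}` isomorphic to `(ℤ/p^kℤ)^m` that preserves the standard symplectic form
extends to a symplectic automorphism of `(ℤ/p^kℤ)^{2g}`. -/
theorem stmt3 (p k g m : ℕ) (hp : p.Prime) (hk : 1 ≤ k) (hm : m ≤ 2*g)
    (G G' : Submodule (ZMod (p^k)) (Fin (2*g) → ZMod (p^k)))
    (eG : G ≃ₗ[ZMod (p^k)] (Fin m → ZMod (p^k)))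
    (eG' : G' ≃ₗ[ZMod (p^k)] (Fin m → ZMod (p^k)))
    (ψ : G ≃ₗ[ZMod (p^k)] G')
    (hψ : ∀ a b : G,
      symp g (ZMod (p^k)) ((ψ a : Fin (2*g) → ZMod (p^k))) ((ψ b : Fin (2*g) → ZMod (p^k)))
        = symp g (ZMod (p^k)) (a : Fin (2*g) → ZMod (p^k)) (b : Fin (2*g) → ZMod (p^k))) :
    ∃ Ψ : (Fin (2*g) → ZMod (p^k)) ≃ₗ[ZMod (p^k)] (Fin (2*g) → ZMod (p^k)),
      (∀ x y, symp g (ZMod (p^k)) (Ψ x) (Ψ y) = symp g (ZMod (p^k)) x y) ∧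
      (∀ a : G, Ψ (a : Fin (2*g) → ZMod (p^k)) = (ψ a : Fin (2*g) → ZMod (p^k))) := by
  have : Fact p.Prime := ⟨hp⟩
  have : NeZero k := ⟨by lia⟩
  simp only [symp, ← Matrix.toBilin'_apply'] at hψ ⊢
  exact stmt3_general (isAlt_toBilin'_sympJ g _) (.ofEquivFun eG)
    (surjective_dualRestrict_comp_toBilin'_sympJ g G)
    (surjective_dualRestrict_comp_toBilin'_sympJ g G') ψ hψ
end

section
/- Two alternating bilinear forms on G = (Z/p^k Z)^m are equivalent under the action of Aut(G) = GL(m, Z/p^k Z) if and only if their invariant tuples q = (q_1, ..., q_k) coincide, where q_i is the F_p-dimension of μ({h ∈ G : (h, x) ≡ 0 mod p^i for all x ∈ G}). -/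
open scoped Matrix

/-- The `i`-th invariant of an alternating bilinear form `B` on `(ℤ/p^kℤ)^m`: the
`𝔽_p`-dimension of the image under `μ : v ↦ p^{k-1}v` (identified with reduction mod `p`)
of the set of `h` with `B(h, x) ≡ 0 mod p^i` for all `x`. -/
noncomputable def qinv (p k m : ℕ)
    (B : (Fin m → ZMod (p^k)) →ₗ[ZMod (p^k)] (Fin m → ZMod (p^k)) →ₗ[ZMod (p^k)] ZMod (p^k))
    (i : ℕ) : ℕ :=
  Module.finrank (ZMod p) (Submodule.span (ZMod p)
    (Set.image (fun h : Fin m → ZMod (p^k) => fun j => (((h j).val : ℕ) : ZMod p))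
      {h | ∀ x, ∃ c, B h x = (p : ZMod (p^k))^i * c}))

/-!
Let `R` be a local principal ideal ring with maximal ideal `𝔪` and residue field `K`. If an
alternating form `B ≠ 0` takes values in `𝔪^a = (c)` but not all in `𝔪^(a+1)`, then `B = c • C` with
`C` alternating and taking a unit value, so `B` splits off `c` times a hyperbolic plane. The numbers
`dim_K (image in K ⊗ M of {h | B(h, M) ⊆ 𝔪^i})` are additive on orthogonal sums, and by Nakayama's
lemma the `i`-th one equals the rank of `M` exactly when `B` has values in `𝔪^i`; so they determine
`a`. Two forms with the same numbers therefore split off the same plane, and their complements again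
have the same numbers: induct on the rank, which is the number with `i = 0`.
-/

open IsLocalRing TensorProduct
open LinearMap (BilinForm)

section OrthogonalSum

variable {R M N M' N' : Type*} [CommRing R]
  [AddCommGroup M] [Module R M] [AddCommGroup N] [Module R N]
  [AddCommGroup M'] [Module R M'] [AddCommGroup N'] [Module R N']

theorem equivalent_iff_exists_linearEquiv {B : BilinForm R M} {B' : BilinForm R M'} :
    B.Equivalent B' ↔ ∃ α : M ≃ₗ[R] M', ∀ x y, B' (α x) (α y) = B x y :=
  ⟨fun ⟨α⟩ ↦ ⟨α.toLinearEquiv, α.map_app'⟩, fun ⟨α, hα⟩ ↦ ⟨⟨α, hα⟩⟩⟩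

theorem equivalent_smul {B : BilinForm R M} {B' : BilinForm R M'} (h : B.Equivalent B') (c : R) :
    (c • B).Equivalent (c • B') := by
  obtain ⟨α, hα⟩ := equivalent_iff_exists_linearEquiv.1 h
  exact equivalent_iff_exists_linearEquiv.2 ⟨α, fun x y ↦ by simp [hα]⟩

/-- The orthogonal sum of two bilinear forms, as a form on the product of their modules. -/
def orthogonalSum (B : BilinForm R M) (C : BilinForm R N) : BilinForm R (M × N) :=
  B.compl₁₂ (.fst R M N) (.fst R M N) + C.compl₁₂ (.snd R M N) (.snd R M N)

@[simp]
theorem orthogonalSum_apply (B : BilinForm R M) (C : BilinForm R N) (x y : M × N) :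
    orthogonalSum B C x y = B x.1 y.1 + C x.2 y.2 :=
  rfl

theorem smul_orthogonalSum (c : R) (B : BilinForm R M) (C : BilinForm R N) :
    c • orthogonalSum B C = orthogonalSum (c • B) (c • C) := by
  simp only [orthogonalSum, smul_add]
  rfl

theorem equivalent_orthogonalSum_congr_right (B : BilinForm R M) {C : BilinForm R N}
    {C' : BilinForm R N'} (h : C.Equivalent C') :
    (orthogonalSum B C).Equivalent (orthogonalSum B C') := by
  obtain ⟨α, hα⟩ := equivalent_iff_exists_linearEquiv.1 h
  exact equivalent_iff_exists_linearEquiv.2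
    ⟨(LinearEquiv.refl R M).prodCongr α, fun x y ↦ by simp [hα]⟩

end OrthogonalSum

section HyperbolicPlane

variable {R M : Type*} [CommRing R] [AddCommGroup M] [Module R M]

/-- The hyperbolic plane: the alternating form on `R²` taking the value `1` on the pair of standard
basis vectors. -/
def hyperbolicPlane (R : Type*) [CommRing R] : BilinForm R (R × R) :=
  LinearMap.BilinForm.linMulLin (.fst R R R) (.snd R R R) -
    LinearMap.BilinForm.linMulLin (.snd R R R) (.fst R R R)

theorem equivalent_orthogonalSum_hyperbolicPlane {C : BilinForm R M} (hC : C.IsAlt) {e f : M}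
    (hef : C e f = 1) :
    C.Equivalent (orthogonalSum (hyperbolicPlane R)
      (C.restrict (LinearMap.ker (C e) ⊓ LinearMap.ker (C f)))) := by
  have hfe : C f e = -1 := by rw [← hC.neg_eq, hef]
  set N := LinearMap.ker (C e) ⊓ LinearMap.ker (C f)
  have hN (n : N) : C e n = 0 ∧ C f n = 0 := n.2
  let g : (R × R) × N →ₗ[R] M :=
    ((LinearMap.toSpanSingleton R M e).coprod (LinearMap.toSpanSingleton R M f)).coprod N.subtype
  have hg (x) : g x = x.1.1 • e + x.1.2 • f + x.2 := rfl
  have hge (x) : C e (g x) = x.1.2 := by simp [hg, hC.self_eq_zero, hef, hN]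
  have hgf (x) : C f (g x) = -x.1.1 := by simp [hg, hC.self_eq_zero, hfe, hN]
  let α : ((R × R) × N) ≃ₗ[R] M :=
    { g with
      invFun x := ((-C f x, C e x),
        ⟨x + C f x • e - C e x • f, by simp [N, hC.self_eq_zero, hef, hfe]⟩)
      left_inv x := by
        refine Prod.ext (Prod.ext ((neg_eq_iff_eq_neg).2 (hgf x)) (hge x)) (Subtype.ext ?_)
        change g x + C f (g x) • e - C e (g x) • f = x.2
        rw [hge, hgf, hg]
        module
      right_inv x := by
        change -C f x • e + C e x • f + (x + C f x • e - C e x • f) = x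
        module }
  refine .symm (equivalent_iff_exists_linearEquiv.2 ⟨α, fun x y ↦ ?_⟩)
  have hNC (z) : C x.2 (g z) = C x.2 z.2 := by
    rw [← hC.neg_eq, ← hC.neg_eq z.2]
    simp [hg, hN]
  calc C (g x) (g y) = x.1.1 * C e (g y) + x.1.2 * C f (g y) + C x.2 (g y) := by
        simp only [hg x, map_add, map_smul, LinearMap.add_apply, LinearMap.smul_apply, smul_eq_mul]
    _ = x.1.1 * y.1.2 - x.1.2 * y.1.1 + C x.2 y.2 := by
        rw [hge, hgf, hNC]
        ring
    _ = _ := rfl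

theorem exists_isAlt_smul_eq [Module.Free R M] {B : BilinForm R M} (hB : B.IsAlt) {c : R}
    (hc : ∀ x y, c ∣ B x y) : ∃ C : BilinForm R M, C.IsAlt ∧ B = c • C := by
  -- If `c` is a zero divisor, the quotients `q x y` need not be bilinear or alternating in `x, y`:
  -- keep only those of pairs of basis vectors `i < j`, and antisymmetrize.
  let b := Module.Free.chooseBasis R M
  let : LinearOrder (Module.Free.ChooseBasisIndex R M) := IsWellOrder.linearOrder WellOrderingRel
  choose q hq using hc
  let D : BilinForm R M :=
    b.constr R fun i ↦ b.constr R fun j ↦ if i < j then q (b i) (b j) else 0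
  have hD (i j) : D (b i) (b j) = if i < j then q (b i) (b j) else 0 := by
    simp only [D, Module.Basis.constr_basis]
  refine ⟨D - D.flip, fun x ↦ by simp, b.ext fun i ↦ b.ext fun j ↦ ?_⟩
  simp only [LinearMap.smul_apply, LinearMap.sub_apply, LinearMap.BilinForm.flip_apply, hD,
    smul_eq_mul]
  rcases lt_trichotomy i j with h | rfl | h
  · simp [h, h.not_gt, ← hq]
  · simp [hB.self_eq_zero]
  · simp [h, h.not_gt, ← hq, hB.neg_eq]

theorem free_and_finite_of_linearEquiv_prod {P N : Type*} [AddCommGroup P] [Module R P]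
    [AddCommGroup N] [Module R N] [IsLocalRing R] [Module.Projective R M] [Module.Finite R M]
    (α : M ≃ₗ[R] P × N) : Module.Free R N ∧ Module.Finite R N := by
  have : Module.Finite R N := Module.Finite.of_surjective (LinearMap.snd R P N ∘ₗ α.toLinearMap)
    (Prod.snd_surjective.comp α.surjective)
  have : Module.Projective R N :=
    .of_split (α.symm.toLinearMap ∘ₗ .inr R P N) (.snd R P N ∘ₗ α.toLinearMap) (by ext; simp)
  exact ⟨Module.free_of_flat_of_isLocalRing, inferInstance⟩

theorem exists_equivalent_orthogonalSum_smul_hyperbolicPlane [IsLocalRing R] [Module.Free R M]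
    [Module.Finite R M] {B : BilinForm R M} (hB : B.IsAlt) {c : R}
    (hc : ∀ x y, B x y ∈ Ideal.span {c})
    (hc' : ¬ ∀ x y, B x y ∈ Ideal.span {c} * maximalIdeal R) :
    ∃ (N : Submodule R M) (D : BilinForm R N), Module.Free R N ∧ Module.Finite R N ∧
      Module.finrank R N < Module.finrank R M ∧ D.IsAlt ∧
      B.Equivalent (orthogonalSum (c • hyperbolicPlane R) D) := by
  obtain ⟨C, hC, rfl⟩ := exists_isAlt_smul_eq hB fun x y ↦ Ideal.mem_span_singleton.1 (hc x y)
  push Not at hc'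
  obtain ⟨e, f, hef⟩ := hc'
  obtain ⟨u, hu⟩ : ∃ u, C e f * u = 1 := by
    refine IsUnit.exists_right_inv (notMem_maximalIdeal.1 fun h ↦ hef ?_)
    exact Ideal.mul_mem_mul (Ideal.mem_span_singleton_self c) h
  have hone : C e (u • f) = 1 := by rw [map_smul, smul_eq_mul, mul_comm, hu]
  have hequiv := equivalent_orthogonalSum_hyperbolicPlane hC hone
  obtain ⟨α, -⟩ := equivalent_iff_exists_linearEquiv.1 hequiv
  obtain ⟨hfree, hfinite⟩ := free_and_finite_of_linearEquiv_prod α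
  have hrank := α.finrank_eq
  simp only [Module.finrank_prod, Module.finrank_self] at hrank
  refine ⟨_, c • C.restrict _, hfree, hfinite, by lia, fun x ↦ by simp [hC.self_eq_zero], ?_⟩
  rw [← smul_orthogonalSum]
  exact equivalent_smul hequiv c

end HyperbolicPlane

section BaseChange

variable {R M N : Type*} (K : Type*) [CommRing R] [CommRing K] [Algebra R K]
  [AddCommGroup M] [Module R M] [AddCommGroup N] [Module R N]

theorem submodule_baseChange_map (α : M →ₗ[R] N) (p : Submodule R M) :
    (p.map α).baseChange K = (p.baseChange K).map (α.baseChange K) := by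
  simp only [Submodule.baseChange_eq_span, Submodule.map_span, Submodule.map_coe,
    Set.image_image, TensorProduct.mk_apply, LinearMap.baseChange_tmul]

theorem map_prodRight_baseChange_prod (p : Submodule R M) (q : Submodule R N) :
    ((p.prod q).baseChange K).map (TensorProduct.prodRight R K K M N).toLinearMap =
      (p.baseChange K).prod (q.baseChange K) := by
  apply le_antisymm
  · rw [Submodule.baseChange_eq_span, Submodule.map_span_le]
    rintro _ ⟨x, hx, rfl⟩
    simpa using ⟨Submodule.tmul_mem_baseChange_of_mem 1 hx.1,
      Submodule.tmul_mem_baseChange_of_mem 1 hx.2⟩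
  · rw [Submodule.prod_le_iff]
    constructor
    · rw [Submodule.baseChange_eq_span K p, Submodule.map_span_le]
      rintro _ ⟨x, hx, rfl⟩
      exact ⟨1 ⊗ₜ (x, 0), Submodule.tmul_mem_baseChange_of_mem 1 ⟨hx, q.zero_mem⟩, by simp⟩
    · rw [Submodule.baseChange_eq_span K q, Submodule.map_span_le]
      rintro _ ⟨y, hy, rfl⟩
      exact ⟨1 ⊗ₜ (0, y), Submodule.tmul_mem_baseChange_of_mem 1 ⟨p.zero_mem, hy⟩, by simp⟩

theorem restrictScalars_baseChange_eq_map (hK : Function.Surjective (algebraMap R K))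
    (p : Submodule R M) :
    (p.baseChange K).restrictScalars R = p.map (TensorProduct.mk R K M 1) := by
  rw [Submodule.baseChange_eq_span, Submodule.restrictScalars_span R K hK, Submodule.span_eq]

end BaseChange

theorem submodule_baseChange_eq_top_iff {R M K : Type*} [CommRing R] [IsLocalRing R] [Field K]
    [Algebra R K] [AddCommGroup M] [Module R M] [Module.Finite R M]
    (hK : Function.Surjective (algebraMap R K)) {p : Submodule R M} :
    p.baseChange K = ⊤ ↔ p = ⊤ := by
  refine ⟨fun h ↦ ?_, fun h ↦ by rw [h, Submodule.baseChange_top]⟩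
  have hker : maximalIdeal R = RingHom.ker (algebraMap R K) :=
    (eq_maximalIdeal (RingHom.ker_isMaximal_of_surjective _ hK)).symm
  let e : ResidueField R ≃ₐ[R] K := (Ideal.quotientEquivAlgOfEq R hker).trans
    (Ideal.quotientKerAlgEquivOfSurjective (f := Algebra.ofId R K) hK)
  let E : K ⊗[R] M ≃ₗ[R] ResidueField R ⊗[R] M :=
    TensorProduct.congr e.symm.toLinearEquiv (.refl R M)
  have hE : E.toLinearMap ∘ₗ TensorProduct.mk R K M 1 =
      TensorProduct.mk R (ResidueField R) M 1 := by
    ext; simp [E]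
  rw [← map_tensorProduct_mk_eq_top, ← hE, Submodule.map_comp,
    ← restrictScalars_baseChange_eq_map K hK, h, Submodule.restrictScalars_top,
    Submodule.map_top, LinearEquiv.range]

theorem finrank_submodule_prod {K V W : Type*} [DivisionRing K] [AddCommGroup V] [Module K V]
    [AddCommGroup W] [Module K W] [Module.Finite K V] [Module.Finite K W]
    (p : Submodule K V) (q : Submodule K W) :
    Module.finrank K (p.prod q) = Module.finrank K p + Module.finrank K q := by
  have hrange : LinearMap.range (p.subtype.prodMap q.subtype) = p.prod q := by
    rw [LinearMap.range_prodMap, p.range_subtype, q.range_subtype]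
  rw [← hrange, LinearMap.finrank_range_of_inj
    (Prod.map_injective.2 ⟨p.subtype_injective, q.subtype_injective⟩), Module.finrank_prod]

section RadicalRank

variable {R M N : Type*} [CommRing R] [AddCommGroup M] [Module R M] [AddCommGroup N] [Module R N]

/-- The radical of a bilinear form modulo an ideal `I`: the vectors `h` such that `B h` vanishes
modulo `I`. -/
def radicalMod (B : BilinForm R M) (I : Ideal R) : Submodule R M :=
  LinearMap.ker (B.compr₂ I.mkQ)

theorem mem_radicalMod {B : BilinForm R M} {I : Ideal R} {h : M} :
    h ∈ radicalMod B I ↔ ∀ x, B h x ∈ I := by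
  simp [radicalMod, LinearMap.ext_iff, Ideal.Quotient.eq_zero_iff_mem]

theorem radicalMod_eq_top {B : BilinForm R M} {I : Ideal R} :
    radicalMod B I = ⊤ ↔ ∀ x y, B x y ∈ I := by
  simp only [Submodule.eq_top_iff', mem_radicalMod]

theorem radicalMod_orthogonalSum (B : BilinForm R M) (C : BilinForm R N) (I : Ideal R) :
    radicalMod (orthogonalSum B C) I = (radicalMod B I).prod (radicalMod C I) := by
  ext h
  simp only [mem_radicalMod, Submodule.mem_prod, orthogonalSum_apply]
  exact ⟨fun H ↦ ⟨fun x ↦ by simpa using H (x, 0), fun y ↦ by simpa using H (0, y)⟩,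
    fun H x ↦ I.add_mem (H.1 x.1) (H.2 x.2)⟩

theorem map_radicalMod {B : BilinForm R M} {C : BilinForm R N} {α : M ≃ₗ[R] N}
    (hα : ∀ x y, C (α x) (α y) = B x y) (I : Ideal R) :
    (radicalMod B I).map α.toLinearMap = radicalMod C I := by
  ext h
  obtain ⟨h, rfl⟩ := α.surjective h
  simp [mem_radicalMod, ← α.toEquiv.forall_congr_right, hα]

section CommRing

variable (K : Type*) [CommRing K] [Algebra R K]

/-- The dimension over `K` of the image in `K ⊗ M` of the radical of `B` modulo `I`. For
`R = ℤ/p^k`, `K = 𝔽_p` and `I = (p^i)` it is the invariant `q_i`, the map `μ` being identified with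
the reduction `M → K ⊗ M`. -/
noncomputable def radicalRank (B : BilinForm R M) (I : Ideal R) : ℕ :=
  Module.finrank K ((radicalMod B I).baseChange K)

theorem radicalRank_eq_of_equivalent {B : BilinForm R M} {C : BilinForm R N}
    (h : B.Equivalent C) (I : Ideal R) : radicalRank K B I = radicalRank K C I := by
  obtain ⟨α, hα⟩ := equivalent_iff_exists_linearEquiv.1 h
  rw [radicalRank, radicalRank, ← map_radicalMod hα, submodule_baseChange_map]
  exact ((α.baseChange R K M N).finrank_map_eq _).symm

theorem radicalRank_eq_finrank_span {ι : Type*} [Finite ι] (B : BilinForm R (ι → R))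
    (I : Ideal R) :
    radicalRank K B I = Module.finrank K (Submodule.span K
      ((fun (h : ι → R) (j : ι) ↦ algebraMap R K (h j)) '' radicalMod B I)) := by
  classical
  have := Fintype.ofFinite ι
  have hmap : TensorProduct.piScalarRight R K K ι ∘ TensorProduct.mk R K (ι → R) 1 =
      fun h j ↦ algebraMap R K (h j) := by
    ext h j
    simp [Algebra.smul_def]
  rw [radicalRank, Submodule.baseChange_eq_span, ← LinearEquiv.finrank_map_eq
    (TensorProduct.piScalarRight R K K ι), Submodule.map_span, Submodule.map_coe, ← hmap,
    Set.image_comp]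
  rfl

end CommRing

variable (K : Type*) [Field K] [Algebra R K]

theorem radicalRank_orthogonalSum [Module.Finite R M] [Module.Finite R N]
    (B : BilinForm R M) (C : BilinForm R N) (I : Ideal R) :
    radicalRank K (orthogonalSum B C) I = radicalRank K B I + radicalRank K C I := by
  rw [radicalRank, radicalMod_orthogonalSum, ← LinearEquiv.finrank_map_eq
    (TensorProduct.prodRight R K K M N), map_prodRight_baseChange_prod, finrank_submodule_prod]
  rfl

variable {K} [IsLocalRing R] [Module.Free R M] [Module.Finite R M]

theorem radicalRank_eq_finrank_iff (hK : Function.Surjective (algebraMap R K))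
    {B : BilinForm R M} {I : Ideal R} :
    radicalRank K B I = Module.finrank R M ↔ ∀ x y, B x y ∈ I := by
  rw [← radicalMod_eq_top, ← submodule_baseChange_eq_top_iff hK, radicalRank,
    ← Module.finrank_baseChange (R := K) (M' := M)]
  exact ⟨Submodule.eq_top_of_finrank_eq, fun h ↦ by rw [h, finrank_top]⟩

theorem radicalRank_top (hK : Function.Surjective (algebraMap R K)) (B : BilinForm R M) :
    radicalRank K B ⊤ = Module.finrank R M :=
  (radicalRank_eq_finrank_iff hK).2 fun _ _ ↦ Submodule.mem_top

end RadicalRank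

section Classification

theorem eq_zero_of_forall_mem_maximalIdeal_pow {R M : Type*} [CommRing R] [IsLocalRing R]
    [IsNoetherianRing R] [AddCommGroup M] [Module R M] {B : BilinForm R M}
    (h : ∀ a x y, B x y ∈ maximalIdeal R ^ a) : B = 0 := by
  refine LinearMap.ext₂ fun x y ↦ ?_
  have hmem : B x y ∈ ⨅ a, maximalIdeal R ^ a := Submodule.mem_iInf _ |>.2 fun a ↦ h a x y
  rwa [Ideal.iInf_pow_eq_bot_of_isLocalRing _ Ideal.IsPrime.ne_top'] at hmem

theorem exists_forall_mem_pow_and_not_forall_mem_pow_succ {R M : Type*} [CommRing R]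
    [IsLocalRing R] [IsNoetherianRing R] [AddCommGroup M] [Module R M] {B : BilinForm R M}
    (hB : B ≠ 0) :
    ∃ a, (∀ x y, B x y ∈ maximalIdeal R ^ a) ∧ ¬ ∀ x y, B x y ∈ maximalIdeal R ^ (a + 1) := by
  by_contra! h
  refine hB (eq_zero_of_forall_mem_maximalIdeal_pow fun a ↦ ?_)
  induction a with
  | zero => simp
  | succ a ih => exact h a ih

variable {R M M' K : Type*} [CommRing R] [IsLocalRing R]
  [IsPrincipalIdealRing R] [Field K] [Algebra R K]
  [AddCommGroup M] [Module R M] [Module.Free R M] [Module.Finite R M]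
  [AddCommGroup M'] [Module R M'] [Module.Free R M'] [Module.Finite R M']

theorem equivalent_of_radicalRank_eq (hK : Function.Surjective (algebraMap R K))
    {B : BilinForm R M} {B' : BilinForm R M'} (hB : B.IsAlt) (hB' : B'.IsAlt)
    (h : ∀ i, radicalRank K B (maximalIdeal R ^ i) = radicalRank K B' (maximalIdeal R ^ i)) :
    B.Equivalent B' := by
  induction hn : Module.finrank R M using Nat.strong_induction_on generalizing M M' with
  | _ n ih =>
  have hrank : Module.finrank R M = Module.finrank R M' := by
    simpa only [pow_zero, Ideal.one_eq_top, radicalRank_top hK] using h 0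
  have hpow (i : ℕ) :
      (∀ x y, B x y ∈ maximalIdeal R ^ i) ↔ ∀ x y, B' x y ∈ maximalIdeal R ^ i := by
    rw [← radicalRank_eq_finrank_iff hK, ← radicalRank_eq_finrank_iff hK, h, hrank]
  rcases eq_or_ne B 0 with rfl | hB0
  · have hB'0 : B' = 0 :=
      eq_zero_of_forall_mem_maximalIdeal_pow fun a ↦ (hpow a).1 (by simp)
    subst hB'0
    exact equivalent_iff_exists_linearEquiv.2 ⟨.ofFinrankEq M M' hrank, by simp⟩
  obtain ⟨a, ha, hsucc⟩ := exists_forall_mem_pow_and_not_forall_mem_pow_succ hB0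
  obtain ⟨c, hc⟩ : ∃ c, maximalIdeal R ^ a = Ideal.span {c} :=
    (IsPrincipalIdealRing.principal _).principal
  have ha' := (hpow a).1 ha
  have hsucc' := mt (hpow (a + 1)).2 hsucc
  rw [pow_succ, hc] at hsucc hsucc'
  rw [hc] at ha ha'
  obtain ⟨N, D, _, _, hN, hD, hBD⟩ :=
    exists_equivalent_orthogonalSum_smul_hyperbolicPlane hB ha hsucc
  obtain ⟨N', D', _, _, -, hD', hBD'⟩ :=
    exists_equivalent_orthogonalSum_smul_hyperbolicPlane hB' ha' hsucc'
  have hDD' (i : ℕ) :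
      radicalRank K D (maximalIdeal R ^ i) = radicalRank K D' (maximalIdeal R ^ i) := by
    have hi := h i
    rw [radicalRank_eq_of_equivalent K hBD, radicalRank_eq_of_equivalent K hBD',
      radicalRank_orthogonalSum, radicalRank_orthogonalSum] at hi
    exact add_left_cancel hi
  have hDequiv : D.Equivalent D' := ih _ (hn ▸ hN) hD hD' hDD' rfl
  exact (hBD.trans (equivalent_orthogonalSum_congr_right _ hDequiv)).trans hBD'.symm

theorem stmt7_general (hK : Function.Surjective (algebraMap R K))
    {B : BilinForm R M} {B' : BilinForm R M'} (hB : B.IsAlt) (hB' : B'.IsAlt) :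
    B.Equivalent B' ↔
      ∀ i, radicalRank K B (maximalIdeal R ^ i) = radicalRank K B' (maximalIdeal R ^ i) :=
  ⟨fun h _ ↦ radicalRank_eq_of_equivalent K h _, equivalent_of_radicalRank_eq hK hB hB'⟩

end Classification

section ZMod

instance isPrincipalIdealRing_zmod (n : ℕ) : IsPrincipalIdealRing (ZMod n) :=
  .of_surjective (Int.castRingHom (ZMod n)) (ZMod.ringHom_surjective _)

/-- Reduction modulo `p`, making `𝔽_p` an algebra over `ℤ/p^k` as required by `radicalRank`. -/
instance algebraZModPow {p k : ℕ} [NeZero k] : Algebra (ZMod (p ^ k)) (ZMod p) :=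
  ZMod.algebra' (ZMod p) p (dvd_pow_self p (NeZero.ne k))

theorem algebraMap_zmod_pow_apply {p k : ℕ} [NeZero p] [NeZero k] (r : ZMod (p ^ k)) :
    algebraMap (ZMod (p ^ k)) (ZMod p) r = (r.val : ZMod p) := by
  rw [← map_natCast (algebraMap (ZMod (p ^ k)) (ZMod p)), ZMod.natCast_zmod_val]

variable {p k m : ℕ} [Fact p.Prime] [NeZero k]

instance isLocalRing_zmod_pow : IsLocalRing (ZMod (p ^ k)) :=
  have : Fact (1 < p ^ k) := ⟨Nat.one_lt_pow (NeZero.ne k) (Fact.out : p.Prime).one_lt⟩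
  .of_surjective' (PadicInt.toZModPow k) (ZMod.ringHom_surjective _)

theorem maximalIdeal_zmod_pow :
    maximalIdeal (ZMod (p ^ k)) = Ideal.span {(p : ZMod (p ^ k))} := by
  rw [← map_maximalIdeal_of_surjective (PadicInt.toZModPow k) (ZMod.ringHom_surjective _),
    PadicInt.maximalIdeal_eq_span_p, Ideal.map_span, Set.image_singleton, map_natCast]

variable (B B' : BilinForm (ZMod (p ^ k)) (Fin m → ZMod (p ^ k)))

theorem qinv_eq_radicalRank (i : ℕ) :
    qinv p k m B i = radicalRank (ZMod p) B (maximalIdeal (ZMod (p ^ k)) ^ i) := by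
  have hset : {h | ∀ x, ∃ c, B h x = (p : ZMod (p ^ k)) ^ i * c} =
      radicalMod B (maximalIdeal (ZMod (p ^ k)) ^ i) := by
    ext h
    simp only [SetLike.mem_coe, mem_radicalMod, maximalIdeal_zmod_pow, Ideal.span_singleton_pow,
      Ideal.mem_span_singleton, Set.mem_ofPred_eq, dvd_def]
  have hmap : (fun (h : Fin m → ZMod (p ^ k)) j ↦ ((h j).val : ZMod p)) =
      fun h j ↦ algebraMap (ZMod (p ^ k)) (ZMod p) (h j) := by
    simp only [algebraMap_zmod_pow_apply]
  rw [radicalRank_eq_finrank_span, qinv, hset, hmap]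

theorem forall_qinv_eq_iff :
    (∀ i, 1 ≤ i → i ≤ k → qinv p k m B i = qinv p k m B' i) ↔
      ∀ i, radicalRank (ZMod p) B (maximalIdeal (ZMod (p ^ k)) ^ i) =
        radicalRank (ZMod p) B' (maximalIdeal (ZMod (p ^ k)) ^ i) := by
  simp only [qinv_eq_radicalRank]
  refine ⟨fun h i ↦ ?_, fun h i _ _ ↦ h i⟩
  rcases i.eq_zero_or_pos with rfl | hi
  · have hK := ZMod.ringHom_surjective (algebraMap (ZMod (p ^ k)) (ZMod p))
    rw [pow_zero, Ideal.one_eq_top, radicalRank_top hK, radicalRank_top hK]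
  have hbot : maximalIdeal (ZMod (p ^ k)) ^ k = ⊥ := by
    rw [maximalIdeal_zmod_pow, Ideal.span_singleton_pow, ← Nat.cast_pow, ZMod.natCast_self,
      Ideal.span_singleton_eq_bot]
  rcases le_total i k with hik | hki
  · exact h i hi hik
  · rw [eq_bot_mono (Ideal.pow_le_pow_right hki) hbot, ← hbot]
    exact h k (Nat.pos_of_neZero k) le_rfl

end ZMod

/-- Two alternating bilinear forms on `G = (ℤ/p^kℤ)^m` are equivalent under `Aut(G)`
if and only if their invariant tuples `(q_1,…,q_k)` coincide. -/
theorem stmt7 (p k m : ℕ) (hp : p.Prime) (hk : 1 ≤ k)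
    (B B' : (Fin m → ZMod (p^k)) →ₗ[ZMod (p^k)]
      (Fin m → ZMod (p^k)) →ₗ[ZMod (p^k)] ZMod (p^k))
    (hB : ∀ a, B a a = 0) (hB' : ∀ a, B' a a = 0) :
    (∃ α : (Fin m → ZMod (p^k)) ≃ₗ[ZMod (p^k)] (Fin m → ZMod (p^k)),
        ∀ x y, B' (α x) (α y) = B x y) ↔
      (∀ i, 1 ≤ i → i ≤ k → qinv p k m B i = qinv p k m B' i) := by
  have := Fact.mk hp
  have := NeZero.of_pos (Nat.lt_of_succ_le hk)
  rw [← equivalent_iff_exists_linearEquiv, forall_qinv_eq_iff]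
  exact stmt7_general (ZMod.ringHom_surjective _) hB hB'
end
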